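/- arXiv:2302.13656 — 12 statements merged into one kernel-verified Lean document; each statement's English description precedes it below -/
import Mathlib

section
/- Klamler's distance d_Δ on the set of quasi-choices over a finite set X is a metric, and it satisfies Axioms A1, A2, A3, A4' and A5'. -/
/-!
Everything reduces to single menus. For finite sets `P`, `Q`, `R` one has
`|P ∆ Q| + |Q ∆ R| = |P ∆ R| + 2 |(P ∆ Q) ∩ (Q ∆ R)|` (`card_symmDiff_add`), so the triangle
inequality holds menu by menu, with equality exactly when `P ∆ Q` and `Q ∆ R` are disjoint, that
is, when `P ∩ R ⊆ Q ⊆ P ∪ R` (`inter_symmDiff_eq_empty_iff`). Summing over nonempty menus gives the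
triangle inequality and A1, since all quasi-choices agree on the empty menu. For A2 the sum is
reindexed along the bijection `A ↦ σ(A)`. A3 and A4' hold termwise, the latter because
`(P ∆ S) ∆ (Q ∆ S) = P ∆ Q`, and for A5' one toggles a single alternative of `A` in `C A`.
-/

/-- A quasi-choice over `X`: a map on menus with `C A ⊆ A` for every menu `A`. -/
def IsQuasiChoice {X : Type*} [DecidableEq X] (C : Finset X → Finset X) : Prop :=
  ∀ A : Finset X, C A ⊆ A

/-- Klamler's distance `d_Δ`. -/
noncomputable def dDelta {X : Type*} [Fintype X] [DecidableEq X]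
    (C C' : Finset X → Finset X) : ℝ :=
  ∑ S ∈ Finset.univ.filter (fun S : Finset X => S ≠ ∅),
    ((symmDiff (C S) (C' S)).card : ℝ)

/-- `C'` is between `C` and `C''`. -/
def Between {X : Type*} [DecidableEq X] (C C' C'' : Finset X → Finset X) : Prop :=
  ∀ S : Finset X, C S ∩ C'' S ⊆ C' S ∧ C' S ⊆ C S ∪ C'' S

/-- `d` is a metric on the set of quasi-choices over `X`. -/
def IsChoiceMetric {X : Type*} [Fintype X] [DecidableEq X]
    (d : (Finset X → Finset X) → (Finset X → Finset X) → ℝ) : Prop :=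
  (∀ C C', IsQuasiChoice C → IsQuasiChoice C' → 0 ≤ d C C') ∧
  (∀ C C', IsQuasiChoice C → IsQuasiChoice C' → (d C C' = 0 ↔ C = C')) ∧
  (∀ C C', IsQuasiChoice C → IsQuasiChoice C' → d C C' = d C' C) ∧
  (∀ C C' C'', IsQuasiChoice C → IsQuasiChoice C' → IsQuasiChoice C'' →
    d C C'' ≤ d C C' + d C' C'')

/-- Axiom A1: the triangle inequality holds with equality exactly for betweenness. -/
def AxiomA1 {X : Type*} [Fintype X] [DecidableEq X]
    (d : (Finset X → Finset X) → (Finset X → Finset X) → ℝ) : Prop :=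
  ∀ C C' C'', IsQuasiChoice C → IsQuasiChoice C' → IsQuasiChoice C'' →
    (d C C' + d C' C'' = d C C'' ↔ Between C C' C'')

/-- Axiom A2: invariance under permutations of the alternatives. -/
def AxiomA2 {X : Type*} [Fintype X] [DecidableEq X]
    (d : (Finset X → Finset X) → (Finset X → Finset X) → ℝ) : Prop :=
  ∀ (σ : Equiv.Perm X) (C C' Ct Ct' : Finset X → Finset X),
    IsQuasiChoice C → IsQuasiChoice C' → IsQuasiChoice Ct → IsQuasiChoice Ct' →
    (∀ A : Finset X, Ct (A.image σ) = (C A).image σ) →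
    (∀ A : Finset X, Ct' (A.image σ) = (C' A).image σ) →
    d C C' = d Ct Ct'

/-- Axiom A3: separability. -/
def AxiomA3 {X : Type*} [Fintype X] [DecidableEq X]
    (d : (Finset X → Finset X) → (Finset X → Finset X) → ℝ) : Prop :=
  ∀ (C C' D D' : Finset X → Finset X) (F : Set (Finset X)),
    IsQuasiChoice C → IsQuasiChoice C' → IsQuasiChoice D → IsQuasiChoice D' →
    (∀ S ∈ F, S ≠ ∅) →
    (∀ S : Finset X, S ≠ ∅ → S ∉ F → C S = C' S ∧ D S = D' S) →
    (∀ S ∈ F, C S = D S ∧ C' S = D' S) →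
    d C C' = d D D'

/-- Axiom A4': translation invariance. -/
def AxiomA4' {X : Type*} [Fintype X] [DecidableEq X]
    (d : (Finset X → Finset X) → (Finset X → Finset X) → ℝ) : Prop :=
  ∀ (C C' Ct Ct' : Finset X → Finset X) (T : Finset X),
    IsQuasiChoice C → IsQuasiChoice C' → IsQuasiChoice Ct → IsQuasiChoice Ct' →
    T ≠ ∅ →
    (∀ B : Finset X, B ≠ T → C B = C' B ∧ C' B = Ct B ∧ Ct B = Ct' B) →
    (∃ S ⊆ T, C T = symmDiff (Ct T) S ∧ C' T = symmDiff (Ct' T) S) →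
    d C C' = d Ct Ct'

/-- Axiom A5': normalization of one-element changes. -/
def AxiomA5' {X : Type*} [Fintype X] [DecidableEq X]
    (d : (Finset X → Finset X) → (Finset X → Finset X) → ℝ) : Prop :=
  ∀ C : Finset X → Finset X, IsQuasiChoice C → ∀ A : Finset X, A ≠ ∅ →
    ∃ C' : Finset X → Finset X, IsQuasiChoice C' ∧
      (symmDiff (C A) (C' A)).card = 1 ∧ (∀ B : Finset X, B ≠ A → C B = C' B) ∧
      d C C' = 1

lemma card_symmDiff_add {X : Type*} [DecidableEq X] (P Q R : Finset X) :
    (symmDiff P Q).card + (symmDiff Q R).card =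
      (symmDiff P R).card + 2 * (symmDiff P Q ∩ symmDiff Q R).card := by
  have h₁ := Finset.card_union_add_card_inter (symmDiff P Q) (symmDiff Q R)
  have h₂ : symmDiff P Q ∪ symmDiff Q R = symmDiff P R ∪ (symmDiff P Q ∩ symmDiff Q R) := by
    ext x
    simp only [Finset.mem_union, Finset.mem_inter, Finset.mem_symmDiff]
    tauto
  have h₃ : Disjoint (symmDiff P R) (symmDiff P Q ∩ symmDiff Q R) := by
    rw [Finset.disjoint_left]
    intro x
    simp only [Finset.mem_inter, Finset.mem_symmDiff]
    tauto
  rw [h₂, Finset.card_union_of_disjoint h₃] at h₁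
  omega

lemma inter_symmDiff_eq_empty_iff {X : Type*} [DecidableEq X] (P Q R : Finset X) :
    symmDiff P Q ∩ symmDiff Q R = ∅ ↔ P ∩ R ⊆ Q ∧ Q ⊆ P ∪ R := by
  simp only [Finset.eq_empty_iff_forall_notMem, Finset.subset_iff, Finset.mem_union,
    Finset.mem_inter, Finset.mem_symmDiff, ← forall_and]
  refine forall_congr' fun x => ?_
  tauto

lemma IsQuasiChoice.apply_empty {X : Type*} [DecidableEq X] {C : Finset X → Finset X}
    (hC : IsQuasiChoice C) : C ∅ = ∅ :=
  Finset.subset_empty.mp (hC ∅)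

/-- The defect in the triangle inequality is an explicit sum of nonnegative terms. It yields both
the inequality and, by vanishing of each term, the equality case A1. -/
lemma dDelta_add {X : Type*} [Fintype X] [DecidableEq X] (C C' C'' : Finset X → Finset X) :
    dDelta C C' + dDelta C' C'' = dDelta C C'' +
      ∑ S ∈ Finset.univ.filter (fun S : Finset X => S ≠ ∅),
        (2 * (symmDiff (C S) (C' S) ∩ symmDiff (C' S) (C'' S)).card : ℝ) := by
  unfold dDelta
  rw [← Finset.sum_add_distrib, ← Finset.sum_add_distrib]
  exact Finset.sum_congr rfl fun S _ => mod_cast card_symmDiff_add (C S) (C' S) (C'' S)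

lemma dDelta_isChoiceMetric {X : Type*} [Fintype X] [DecidableEq X] :
    IsChoiceMetric (dDelta (X := X)) := by
  refine ⟨fun C C' _ _ => Finset.sum_nonneg fun S _ => by positivity, fun C C' hC hC' => ?_,
    fun C C' _ _ => by simp only [dDelta, symmDiff_comm], fun C C' C'' _ _ _ => ?_⟩
  · unfold dDelta
    rw [Finset.sum_eq_zero_iff_of_nonneg fun S _ => by positivity]
    constructor
    · intro h
      funext S
      by_cases hS : S = ∅
      · rw [hS, hC.apply_empty, hC'.apply_empty]
      · have hcard := h S (by simpa using hS)
        rw [Nat.cast_eq_zero, Finset.card_eq_zero] at hcard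
        exact symmDiff_eq_bot.mp hcard
    · rintro rfl S -
      simp
  · rw [dDelta_add]
    exact le_add_of_nonneg_right (Finset.sum_nonneg fun S _ => by positivity)

lemma dDelta_axiomA1 {X : Type*} [Fintype X] [DecidableEq X] :
    AxiomA1 (dDelta (X := X)) := by
  intro C C' C'' hC hC' hC''
  rw [dDelta_add, add_eq_left, Finset.sum_eq_zero_iff_of_nonneg fun S _ => by positivity]
  refine forall_congr' fun S => ?_
  rw [← inter_symmDiff_eq_empty_iff]
  by_cases hS : S = ∅
  · subst hS
    simp [hC.apply_empty, hC'.apply_empty, hC''.apply_empty]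
  · simp [hS]

lemma dDelta_axiomA2 {X : Type*} [Fintype X] [DecidableEq X] :
    AxiomA2 (dDelta (X := X)) := by
  intro σ C C' Ct Ct' _ _ _ _ h h'
  refine Finset.sum_equiv σ.finsetCongr (fun S => by simp) fun S _ => ?_
  rw [Equiv.finsetCongr_apply, Finset.map_eq_image, Equiv.coe_toEmbedding, h, h',
    ← Finset.image_symmDiff _ _ σ.injective, Finset.card_image_of_injective _ σ.injective]

lemma dDelta_axiomA3 {X : Type*} [Fintype X] [DecidableEq X] :
    AxiomA3 (dDelta (X := X)) := by
  intro C C' D D' F _ _ _ _ _ hout hin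
  refine Finset.sum_congr rfl fun S hS => ?_
  by_cases hF : S ∈ F
  · rw [(hin S hF).1, (hin S hF).2]
  · obtain ⟨h₁, h₂⟩ := hout S (by simpa using hS) hF
    rw [h₁, h₂, symmDiff_self, symmDiff_self]

lemma dDelta_axiomA4' {X : Type*} [Fintype X] [DecidableEq X] :
    AxiomA4' (dDelta (X := X)) := by
  rintro C C' Ct Ct' T _ _ _ _ _ h ⟨S, _, h₁, h₂⟩
  refine Finset.sum_congr rfl fun B _ => ?_
  by_cases hB : B = T
  · rw [hB, h₁, h₂, symmDiff_symmDiff_symmDiff_comm, symmDiff_self, symmDiff_bot]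
  · obtain ⟨e₁, e₂, e₃⟩ := h B hB
    rw [e₁, e₂, e₃]

lemma dDelta_axiomA5' {X : Type*} [Fintype X] [DecidableEq X] :
    AxiomA5' (dDelta (X := X)) := by
  intro C hC A hA
  obtain ⟨a, ha⟩ := Finset.nonempty_iff_ne_empty.mpr hA
  have hne : ∀ B, B ≠ A → Function.update C A (symmDiff (C A) {a}) B = C B :=
    fun B hB => Function.update_of_ne hB _ _
  refine ⟨Function.update C A (symmDiff (C A) {a}), fun B => ?_, by simp,
    fun B hB => (hne B hB).symm, ?_⟩
  · by_cases hB : B = A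
    · subst hB
      rw [Function.update_self]
      exact (symmDiff_le_sup (a := C B) (b := {a})).trans
        (sup_le (hC B) (Finset.singleton_subset_iff.mpr ha))
    · rw [hne B hB]
      exact hC B
  · unfold dDelta
    rw [Finset.sum_eq_single A]
    · simp
    · intro B _ hB
      simp [hne B hB]
    · intro h
      simp [hA] at h

/-- Klamler's distance is a metric on quasi-choices and satisfies
Axioms A1, A2, A3, A4' and A5'. -/
theorem dDelta_isChoiceMetric_and_axioms (X : Type*) [Fintype X] [DecidableEq X] :
    IsChoiceMetric (dDelta (X := X)) ∧ AxiomA1 (dDelta (X := X)) ∧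
      AxiomA2 (dDelta (X := X)) ∧ AxiomA3 (dDelta (X := X)) ∧
      AxiomA4' (dDelta (X := X)) ∧ AxiomA5' (dDelta (X := X)) := by
  exact ⟨dDelta_isChoiceMetric, dDelta_axiomA1, dDelta_axiomA2, dDelta_axiomA3, dDelta_axiomA4',
    dDelta_axiomA5'⟩
end

section
/- If d is a metric on the set of quasi-choices over a finite set X satisfying Axioms A1, A2, A3, A4' and A5', then d = d_Δ, i.e., d(C,C') = Σ_{∅ ≠ S ⊆ X} |C(S) Δ C'(S)| for all quasi-choices C, C' over X. -/
section Helpers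

variable {X : Type*} [DecidableEq X]

/-- The map with value `V` at the menu `A` and empty value at every other menu; it is a quasi-choice
when `V ⊆ A`. -/
def pointChoice (A V : Finset X) : Finset X → Finset X :=
  Function.update (fun _ => ∅) A V

/-- The map obtained from `C` by switching the membership of `x` in `C A`. -/
def toggle (C : Finset X → Finset X) (A : Finset X) (x : X) : Finset X → Finset X :=
  Function.update C A (symmDiff (C A) {x})

lemma isQuasiChoice_update {C : Finset X → Finset X} (hC : IsQuasiChoice C) {A V : Finset X}
    (hV : V ⊆ A) : IsQuasiChoice (Function.update C A V) := by
  intro B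
  by_cases h : B = A
  · subst h; simpa using hV
  · simpa [h] using hC B

lemma isQuasiChoice_empty : IsQuasiChoice (fun _ : Finset X => (∅ : Finset X)) :=
  fun _ => Finset.empty_subset _

lemma isQuasiChoice_pointChoice {A V : Finset X} (hV : V ⊆ A) :
    IsQuasiChoice (pointChoice A V) :=
  isQuasiChoice_update isQuasiChoice_empty hV

lemma symmDiff_singleton_subset {A B : Finset X} {x : X} (hB : B ⊆ A) (hx : x ∈ A) :
    symmDiff B {x} ⊆ A := by
  intro y hy
  rw [Finset.mem_symmDiff, Finset.mem_singleton] at hy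
  rcases hy with hy | hy
  · exact hB hy.1
  · exact hy.1 ▸ hx

lemma isQuasiChoice_toggle {C : Finset X → Finset X} (hC : IsQuasiChoice C) {A : Finset X} {x : X}
    (hx : x ∈ A) : IsQuasiChoice (toggle C A x) :=
  isQuasiChoice_update hC (symmDiff_singleton_subset (hC A) hx)

lemma between_toggle {C C' : Finset X → Finset X} {A : Finset X} {x : X}
    (hx : x ∈ symmDiff (C A) (C' A)) : Between C (toggle C A x) C' := by
  intro S
  by_cases hS : S = A
  · subst hS
    rw [Finset.mem_symmDiff] at hx
    constructor <;> intro y hy <;> by_cases hyx : y = x <;>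
      simp_all [toggle, Finset.mem_symmDiff]
  · simp only [toggle, Function.update_of_ne hS]
    exact ⟨Finset.inter_subset_left, Finset.subset_union_left⟩

lemma exists_mem_symmDiff {C C' : Finset X → Finset X} (hne : C ≠ C') :
    ∃ A x, x ∈ symmDiff (C A) (C' A) := by
  obtain ⟨A, hA⟩ := Function.ne_iff.1 hne
  obtain ⟨x, hx⟩ := Finset.nonempty_iff_ne_empty.2
    (fun h => hA (symmDiff_eq_bot.1 h) : symmDiff (C A) (C' A) ≠ ∅)
  exact ⟨A, x, hx⟩

variable [Fintype X] {d : (Finset X → Finset X) → (Finset X → Finset X) → ℝ}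

/-- A3 empties all menus other than `A`, and A4' then translates `C A` to `∅`. -/
lemma dist_toggle_eq (h3 : AxiomA3 d) (h4 : AxiomA4' d) {C : Finset X → Finset X}
    (hC : IsQuasiChoice C) {A : Finset X} {x : X} (hx : x ∈ A) :
    d C (toggle C A x) = d (fun _ => ∅) (pointChoice A {x}) := by
  have hA : A ≠ ∅ := Finset.ne_empty_of_mem hx
  have hsub := symmDiff_singleton_subset (hC A) hx
  trans d (pointChoice A (C A)) (pointChoice A (symmDiff (C A) {x}))
  · refine h3 _ _ _ _ {A} hC (isQuasiChoice_toggle hC hx) (isQuasiChoice_pointChoice (hC A))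
      (isQuasiChoice_pointChoice hsub) ?_ ?_ ?_
    · rintro S rfl; exact hA
    · intro S _ hS
      have hS' : S ≠ A := hS
      simp [toggle, pointChoice, hS']
    · rintro S rfl; simp [toggle, pointChoice]
  · refine h4 _ _ _ _ A (isQuasiChoice_pointChoice (hC A)) (isQuasiChoice_pointChoice hsub)
      isQuasiChoice_empty (isQuasiChoice_pointChoice (by simpa using hx)) hA ?_ ⟨C A, hC A, ?_, ?_⟩
    · intro B hB
      simp [pointChoice, hB]
    · rw [← Finset.bot_eq_empty, bot_symmDiff]
      simp [pointChoice]
    · simp [pointChoice, symmDiff_comm]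

/-- The transposition of `x` and `y` maps the menu `A` onto itself. -/
lemma dist_pointChoice_eq (h2 : AxiomA2 d) {A : Finset X} {x y : X} (hx : x ∈ A) (hy : y ∈ A) :
    d (fun _ => ∅) (pointChoice A {x}) = d (fun _ => ∅) (pointChoice A {y}) := by
  have hA : A.image (Equiv.swap x y) = A := by
    apply Finset.eq_of_subset_of_card_le
    · intro z hz
      obtain ⟨w, hw, rfl⟩ := Finset.mem_image.1 hz
      rw [Equiv.swap_apply_def]
      split_ifs <;> assumption
    · rw [Finset.card_image_of_injective _ (Equiv.swap x y).injective]
  refine h2 (Equiv.swap x y) _ _ _ _ isQuasiChoice_empty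
    (isQuasiChoice_pointChoice (by simpa using hx)) isQuasiChoice_empty
    (isQuasiChoice_pointChoice (by simpa using hy)) (fun _ => by simp) ?_
  intro B
  by_cases hB : B = A
  · subst hB; rw [hA]; simp [pointChoice]
  · have hB' : B.image (Equiv.swap x y) ≠ A := fun h =>
      hB (Finset.image_injective (Equiv.swap x y).injective (h.trans hA.symm))
    simp [pointChoice, hB, hB']

/-- Switching the membership of a single element at a single menu has length one. -/
lemma dist_toggle (h2 : AxiomA2 d) (h3 : AxiomA3 d) (h4 : AxiomA4' d) (h5 : AxiomA5' d)
    {C : Finset X → Finset X} (hC : IsQuasiChoice C) {A : Finset X} {x : X} (hx : x ∈ A) :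
    d C (toggle C A x) = 1 := by
  obtain ⟨C', hC', hcard, hB, hd⟩ :=
    h5 (fun _ => ∅) isQuasiChoice_empty A (Finset.ne_empty_of_mem hx)
  rw [← Finset.bot_eq_empty, bot_symmDiff] at hcard
  obtain ⟨y, hy⟩ := Finset.card_eq_one.1 hcard
  have hyA : y ∈ A := hC' A (by simp [hy])
  have hC'_eq : C' = pointChoice A {y} := by
    funext B
    by_cases h : B = A
    · subst h; simp [pointChoice, hy]
    · simp [pointChoice, h, ← hB B h]
  rw [dist_toggle_eq h3 h4 hC hx, dist_pointChoice_eq h2 hx hyA, ← hC'_eq, hd]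

lemma dDelta_toggle {C C' : Finset X → Finset X} {A : Finset X} {x : X} (hA : A ≠ ∅)
    (hx : x ∈ symmDiff (C A) (C' A)) : dDelta C C' = 1 + dDelta (toggle C A x) C' := by
  have hmem : A ∈ Finset.univ.filter (fun S : Finset X => S ≠ ∅) := by simpa using hA
  have herase : symmDiff (toggle C A x A) (C' A) = (symmDiff (C A) (C' A)).erase x := by
    rw [Finset.mem_symmDiff] at hx
    ext y
    by_cases hyx : y = x <;> simp_all [toggle, Finset.mem_symmDiff]; tauto
  have hcard := Finset.card_erase_add_one hx
  rw [← herase] at hcard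
  unfold dDelta
  rw [← Finset.add_sum_erase _ _ hmem, ← Finset.add_sum_erase _ _ hmem, ← hcard]
  have hrest : ∀ S ∈ (Finset.univ.filter (fun S : Finset X => S ≠ ∅)).erase A,
      ((symmDiff (toggle C A x S) (C' S)).card : ℝ) = ((symmDiff (C S) (C' S)).card : ℝ) := by
    intro S hS
    simp [toggle, Function.update_of_ne (Finset.ne_of_mem_erase hS)]
  rw [Finset.sum_congr rfl hrest]
  push_cast
  ring

lemma exists_natCast_eq_dDelta (C C' : Finset X → Finset X) : ∃ n : ℕ, dDelta C C' = n :=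
  ⟨∑ S ∈ Finset.univ.filter (fun S : Finset X => S ≠ ∅), (symmDiff (C S) (C' S)).card, by
    simp [dDelta]⟩

end Helpers

/-- Uniqueness (Carpentiere--Giarlotta--Watson / Klamler): any metric on quasi-choices
satisfying Axioms A1, A2, A3, A4' and A5' coincides with Klamler's distance `d_Δ`. -/
theorem eq_dDelta_of_axioms {X : Type*} [Fintype X] [DecidableEq X]
    (d : (Finset X → Finset X) → (Finset X → Finset X) → ℝ)
    (hmetric : IsChoiceMetric d) (h1 : AxiomA1 d) (h2 : AxiomA2 d) (h3 : AxiomA3 d)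
    (h4 : AxiomA4' d) (h5 : AxiomA5' d) :
    ∀ C C' : Finset X → Finset X, IsQuasiChoice C → IsQuasiChoice C' →
      d C C' = dDelta C C' := by
  intro C C' hC hC'
  obtain ⟨n, hn⟩ := exists_natCast_eq_dDelta C C'
  induction n generalizing C with
  | zero =>
    have hCC' : C = C' := by
      by_contra hne
      obtain ⟨A, x, hx⟩ := exists_mem_symmDiff hne
      have hxA : x ∈ A := by
        rcases Finset.mem_symmDiff.1 hx with h | h
        exacts [hC A h.1, hC' A h.1]
      have := dDelta_toggle (Finset.ne_empty_of_mem hxA) hx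
      obtain ⟨m, hm⟩ := exists_natCast_eq_dDelta (toggle C A x) C'
      rw [hn, hm] at this
      norm_cast at this
      omega
    rw [hn, (hmetric.2.1 C C' hC hC').2 hCC', Nat.cast_zero]
  | succ n ih =>
    have hne : C ≠ C' := by
      rintro rfl
      have h0 : dDelta C C = 0 := by simp [dDelta]
      rw [h0] at hn
      norm_cast at hn
    obtain ⟨A, x, hx⟩ := exists_mem_symmDiff hne
    have hxA : x ∈ A := by
      rcases Finset.mem_symmDiff.1 hx with h | h
      exacts [hC A h.1, hC' A h.1]
    have hstep := dDelta_toggle (Finset.ne_empty_of_mem hxA) hx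
    have hT := isQuasiChoice_toggle hC hxA
    have hih := ih (toggle C A x) hT (by rw [hn] at hstep; push_cast at hstep; linarith)
    rw [← (h1 C _ C' hC hT hC').2 (between_toggle hx), hih, dist_toggle h2 h3 h4 h5 hC hxA, hstep]
end

section
/- (Elementary Decomposability) Let d be a metric on the set of quasi-choices over a finite set X satisfying Axioms A1 and A3. Then for all quasi-choices C, C' over X, d(C,C') = Σ_{∅ ≠ S ⊆ X} d_S(C(S), C'(S)), where d_S is the characteristic metric induced by d. -/
/-- The elementary quasi-choice `C_{S ↦ T}`, taking the value `T` on the menu `S`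
and `∅` elsewhere. -/
def elemQC {X : Type*} [DecidableEq X] (S T : Finset X) : Finset X → Finset X :=
  fun A => if A = S then T else ∅

/-- The intermediate map with the values of `C'` on the menus in `T` and those of `C` elsewhere. -/
def switchOn {X : Type*} [DecidableEq X] (C C' : Finset X → Finset X)
    (T : Finset (Finset X)) : Finset X → Finset X :=
  fun A => if A ∈ T then C' A else C A

theorem isQuasiChoice_switchOn {X : Type*} [DecidableEq X] {C C' : Finset X → Finset X}
    (hC : IsQuasiChoice C) (hC' : IsQuasiChoice C') (T : Finset (Finset X)) :
    IsQuasiChoice (switchOn C C' T) := by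
  intro A
  unfold switchOn
  split_ifs
  exacts [hC' A, hC A]

theorem isQuasiChoice_elemQC {X : Type*} [DecidableEq X] {S T : Finset X} (h : T ⊆ S) :
    IsQuasiChoice (elemQC S T) := by
  intro A
  unfold elemQC
  split_ifs with hA
  exacts [hA ▸ h, Finset.empty_subset A]

theorem between_switchOn {X : Type*} [DecidableEq X] (C C' : Finset X → Finset X)
    {T U : Finset (Finset X)} (hTU : T ⊆ U) :
    Between C (switchOn C C' T) (switchOn C C' U) := by
  intro A
  by_cases hT : A ∈ T
  · simp [switchOn, hT, hTU hT]
  · simp [switchOn, hT]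

/-- Switching the single menu `S` costs `d_S(C(S), C'(S))`, whatever has been switched before. -/
theorem dist_switchOn_insert {X : Type*} [Fintype X] [DecidableEq X]
    {d : (Finset X → Finset X) → (Finset X → Finset X) → ℝ} (h3 : AxiomA3 d)
    {C C' : Finset X → Finset X} (hC : IsQuasiChoice C) (hC' : IsQuasiChoice C')
    {S : Finset X} {T : Finset (Finset X)} (hS : S ≠ ∅) (hST : S ∉ T) :
    d (switchOn C C' T) (switchOn C C' (insert S T)) =
      d (elemQC S (C S)) (elemQC S (C' S)) := by
  refine h3 _ _ _ _ {S} (isQuasiChoice_switchOn hC hC' _) (isQuasiChoice_switchOn hC hC' _)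
    (isQuasiChoice_elemQC (hC S)) (isQuasiChoice_elemQC (hC' S)) ?_ ?_ ?_
  · rintro A rfl
    exact hS
  · intro A _ hA
    have hA' : A ≠ S := hA
    simp [switchOn, elemQC, hA']
  · rintro A rfl
    simp [switchOn, elemQC, hST]

theorem dist_switchOn {X : Type*} [Fintype X] [DecidableEq X]
    {d : (Finset X → Finset X) → (Finset X → Finset X) → ℝ}
    (hmetric : IsChoiceMetric d) (h1 : AxiomA1 d) (h3 : AxiomA3 d)
    {C C' : Finset X → Finset X} (hC : IsQuasiChoice C) (hC' : IsQuasiChoice C')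
    (T : Finset (Finset X)) (hT : ∀ S ∈ T, S ≠ ∅) :
    d C (switchOn C C' T) = ∑ S ∈ T, d (elemQC S (C S)) (elemQC S (C' S)) := by
  induction T using Finset.induction_on with
  | empty =>
    rw [Finset.sum_empty]
    exact (hmetric.2.1 _ _ hC (isQuasiChoice_switchOn hC hC' _)).2 (by ext1 A; simp [switchOn])
  | insert S T hST ih =>
    have hadd := (h1 C (switchOn C C' T) (switchOn C C' (insert S T)) hC
      (isQuasiChoice_switchOn hC hC' _) (isQuasiChoice_switchOn hC hC' _)).2
      (between_switchOn C C' (Finset.subset_insert S T))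
    rw [Finset.sum_insert hST, ← hadd, ih fun A hA => hT A (Finset.mem_insert_of_mem hA),
      dist_switchOn_insert h3 hC hC' (hT S (Finset.mem_insert_self S T)) hST, add_comm]

/-- Elementary Decomposability: a metric on quasi-choices satisfying Axioms A1 and A3
is the sum of its characteristic metrics `d_S(A,B) = d(C_{S↦A}, C_{S↦B})`. -/
theorem elementary_decomposability {X : Type*} [Fintype X] [DecidableEq X]
    (d : (Finset X → Finset X) → (Finset X → Finset X) → ℝ)
    (hmetric : IsChoiceMetric d) (h1 : AxiomA1 d) (h3 : AxiomA3 d) :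
    ∀ C C' : Finset X → Finset X, IsQuasiChoice C → IsQuasiChoice C' →
      d C C' = ∑ S ∈ Finset.univ.filter (fun S : Finset X => S ≠ ∅),
        d (elemQC S (C S)) (elemQC S (C' S)) := by
  intro C C' hC hC'
  rw [← dist_switchOn hmetric h1 h3 hC hC' _ fun S hS => (Finset.mem_filter.1 hS).2]
  congr 1
  ext1 A
  by_cases hA : A = ∅
  · -- The empty menu is never switched, but both quasi-choices are empty there.
    subst hA
    simp [switchOn, Finset.subset_empty.1 (hC ∅), Finset.subset_empty.1 (hC' ∅)]
  · simp [switchOn, hA]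
end

section
/- The rational distance d_rat is a metric on the set of quasi-choices over a finite set X: for all quasi-choices C, C', C'', d_rat(C,C') ≥ 0 with equality iff C = C'; d_rat(C,C') = d_rat(C',C); and d_rat(C,C') + d_rat(C',C'') ≥ d_rat(C,C''). -/
/-- The rational localization `C_A` of a quasi-choice `C` at the menu `A`,
evaluated at `B ⊆ A`. -/
def ratLoc {X : Type*} [DecidableEq X] (C : Finset X → Finset X) (A B : Finset X) :
    Finset X :=
  if (C A ∩ B).Nonempty then C A ∩ B else C B

/-- The rational distance `d_rat` between two quasi-choices. -/
noncomputable def dRat {X : Type*} [Fintype X] [DecidableEq X]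
    (C C' : Finset X → Finset X) : ℝ :=
  ∑ A ∈ Finset.univ.filter (fun A : Finset X => A ≠ ∅),
    ∑ B ∈ A.powerset, ((symmDiff (ratLoc C A B) (ratLoc C' A B)).card : ℝ)

lemma ratLoc_self {X : Type*} [DecidableEq X] {C : Finset X → Finset X}
    (hC : IsQuasiChoice C) (A : Finset X) : ratLoc C A A = C A := by
  simp [ratLoc, Finset.inter_eq_left.mpr (hC A)]

lemma card_symmDiff_triangle {X : Type*} [DecidableEq X] (s t u : Finset X) :
    ((symmDiff s u).card : ℝ) ≤ (symmDiff s t).card + (symmDiff t u).card := by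
  have h : symmDiff s u ⊆ symmDiff s t ∪ symmDiff t u := symmDiff_triangle s t u
  exact_mod_cast (Finset.card_le_card h).trans (Finset.card_union_le _ _)

/-- The rational distance `d_rat` is a metric on the set of quasi-choices over `X`. -/
theorem dRat_isMetric {X : Type*} [Fintype X] [DecidableEq X] :
    (∀ C C' : Finset X → Finset X, IsQuasiChoice C → IsQuasiChoice C' →
      0 ≤ dRat C C') ∧
    (∀ C C' : Finset X → Finset X, IsQuasiChoice C → IsQuasiChoice C' →
      (dRat C C' = 0 ↔ C = C')) ∧
    (∀ C C' : Finset X → Finset X, IsQuasiChoice C → IsQuasiChoice C' →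
      dRat C C' = dRat C' C) ∧
    (∀ C C' C'' : Finset X → Finset X,
      IsQuasiChoice C → IsQuasiChoice C' → IsQuasiChoice C'' →
      dRat C C'' ≤ dRat C C' + dRat C' C'') := by
  refine ⟨fun C C' _ _ => ?_, fun C C' hC hC' => ⟨fun h => ?_, ?_⟩, fun C C' _ _ => ?_,
    fun C C' C'' _ _ _ => ?_⟩
  · exact Finset.sum_nonneg fun A _ => Finset.sum_nonneg fun B _ => Nat.cast_nonneg _
  · funext A
    by_cases hA : A = ∅
    -- The empty menu does not occur in the sum; there both values are forced to be empty.
    · subst hA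
      rw [Finset.subset_empty.mp (hC ∅), Finset.subset_empty.mp (hC' ∅)]
    · have h1 := (Finset.sum_eq_zero_iff_of_nonneg
        (fun A _ => Finset.sum_nonneg fun B _ => Nat.cast_nonneg _)).mp h A (by simp [hA])
      have h2 := (Finset.sum_eq_zero_iff_of_nonneg
        (fun B _ => Nat.cast_nonneg _)).mp h1 A (Finset.mem_powerset_self A)
      rw [ratLoc_self hC, ratLoc_self hC', Nat.cast_eq_zero, Finset.card_eq_zero] at h2
      exact symmDiff_eq_bot.mp h2
  · rintro rfl
    simp [dRat]
  · simp only [dRat, symmDiff_comm]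
  · simp only [dRat, ← Finset.sum_add_distrib]
    exact Finset.sum_le_sum fun A _ => Finset.sum_le_sum fun B _ =>
      card_symmDiff_triangle _ _ _
end

section
/- The rational distance d_rat fails Axiom A1: for X = {x,y,z} with x, y, z distinct, let C, C', C'' be the quasi-choices mapping each singleton to itself and with C({x,y})={x}, C({x,z})={x,z}, C({y,z})=∅, C(X)={x,z}; C'({x,y})={x,y}, C'({x,z})={x,z}, C'({y,z})={y}, C'(X)={x,y}; C''({x,y})={x,y}, C''({x,z})={x,z}, C''({y,z})={y,z}, C''(X)={y}. Then C' is between C and C'', yet d_rat(C,C'') = 10 while d_rat(C,C') + d_rat(C',C'') = 8 + 4 = 12. -/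
theorem singleton_sdiff_of_notMem {X : Type*} [DecidableEq X] {a : X} {S : Finset X}
    (h : a ∉ S) : ({a} : Finset X) \ S = {a} :=
  Finset.sdiff_eq_self_of_disjoint (Finset.disjoint_singleton_left.2 h)

theorem sum_powerset_pair {X : Type*} [DecidableEq X] {x y : X} (hxy : x ≠ y)
    (f : Finset X → ℝ) :
    ∑ B ∈ ({x, y} : Finset X).powerset, f B = f ∅ + f {y} + (f {x} + f {x, y}) := by
  rw [Finset.sum_powerset_insert (by simp [hxy]), ← insert_empty_eq y,
    Finset.sum_powerset_insert (by simp), Finset.sum_powerset_insert (by simp)]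
  simp

theorem sum_powerset_singleton {X : Type*} [DecidableEq X] (x : X) (f : Finset X → ℝ) :
    ∑ B ∈ ({x} : Finset X).powerset, f B = f ∅ + f {x} := by
  rw [← insert_empty_eq x, Finset.sum_powerset_insert (by simp)]
  simp

theorem sum_powerset_triple {X : Type*} [DecidableEq X] {x y z : X}
    (hxy : x ≠ y) (hxz : x ≠ z) (hyz : y ≠ z) (f : Finset X → ℝ) :
    ∑ B ∈ ({x, y, z} : Finset X).powerset, f B =
      f ∅ + f {z} + (f {y} + f {y, z}) + (f {x} + f {x, z} + (f {x, y} + f {x, y, z})) := by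
  rw [Finset.sum_powerset_insert (by simp [hxy, hxz]), sum_powerset_pair hyz,
    sum_powerset_pair hyz]
  simp

/-- The distance on a three-element set as a sum over its seven nonempty menus. -/
theorem dRat_eq {X : Type*} [Fintype X] [DecidableEq X] {x y z : X}
    (hxy : x ≠ y) (hxz : x ≠ z) (hyz : y ≠ z)
    (huniv : (Finset.univ : Finset X) = {x, y, z}) (C C' : Finset X → Finset X) :
    let g : Finset X → ℝ := fun A =>
      ∑ B ∈ A.powerset, ((symmDiff (ratLoc C A B) (ratLoc C' A B)).card : ℝ)
    dRat C C' = g {z} + (g {y} + g {y, z}) + (g {x} + g {x, z} + (g {x, y} + g {x, y, z})) := by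
  intro g
  have h : (Finset.univ : Finset (Finset X)) = ({x, y, z} : Finset X).powerset := by
    rw [← huniv, Finset.powerset_univ]
  have hd : dRat C C' = ∑ A ∈ Finset.univ.filter (fun A : Finset X => A ≠ ∅), g A := rfl
  rw [hd, Finset.sum_filter, h, sum_powerset_triple hxy hxz hyz]
  simp

/-- The rational distance `d_rat` fails Axiom A1: a concrete counterexample on a
three-element set. -/
theorem dRat_fails_A1 {X : Type*} [Fintype X] [DecidableEq X] (x y z : X)
    (hxy : x ≠ y) (hxz : x ≠ z) (hyz : y ≠ z)
    (huniv : (Finset.univ : Finset X) = {x, y, z})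
    (C C' C'' : Finset X → Finset X)
    (hC0 : C ∅ = ∅) (hCx : C {x} = {x}) (hCy : C {y} = {y}) (hCz : C {z} = {z})
    (hCxy : C {x, y} = {x}) (hCxz : C {x, z} = {x, z})
    (hCyz : C {y, z} = ∅) (hCX : C {x, y, z} = {x, z})
    (hC'0 : C' ∅ = ∅) (hC'x : C' {x} = {x}) (hC'y : C' {y} = {y}) (hC'z : C' {z} = {z})
    (hC'xy : C' {x, y} = {x, y}) (hC'xz : C' {x, z} = {x, z})
    (hC'yz : C' {y, z} = {y}) (hC'X : C' {x, y, z} = {x, y})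
    (hC''0 : C'' ∅ = ∅) (hC''x : C'' {x} = {x}) (hC''y : C'' {y} = {y})
    (hC''z : C'' {z} = {z})
    (hC''xy : C'' {x, y} = {x, y}) (hC''xz : C'' {x, z} = {x, z})
    (hC''yz : C'' {y, z} = {y, z}) (hC''X : C'' {x, y, z} = {y}) :
    Between C C' C'' ∧ dRat C C'' = 10 ∧
      dRat C C' = 8 ∧ dRat C' C'' = 4 ∧ dRat C C' + dRat C' C'' = 12 := by
  have hs : ∀ S : Finset X, S = ∅ ∨ S = {x} ∨ S = {y} ∨ S = {z} ∨ S = {x, y} ∨ S = {x, z} ∨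
      S = {y, z} ∨ S = {x, y, z} := by
    intro S
    have hS : S ∈ ({x, y, z} : Finset X).powerset := by simp [← huniv]
    simp only [← insert_empty_eq z, Finset.powerset_insert, Finset.powerset_empty] at hS
    simp at hS
    tauto
  have h1 : dRat C C'' = 10 := by
    rw [dRat_eq hxy hxz hyz huniv]
    simp only [sum_powerset_singleton, sum_powerset_pair hxy, sum_powerset_pair hxz,
      sum_powerset_pair hyz, sum_powerset_triple hxy hxz hyz]
    simp [ratLoc, symmDiff, Finset.insert_sdiff_of_mem, Finset.insert_sdiff_of_notMem,
      singleton_sdiff_of_notMem, hxy.symm, hxz.symm, hyz.symm, *]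
    norm_num
  have h2 : dRat C C' = 8 := by
    rw [dRat_eq hxy hxz hyz huniv]
    simp only [sum_powerset_singleton, sum_powerset_pair hxy, sum_powerset_pair hxz,
      sum_powerset_pair hyz, sum_powerset_triple hxy hxz hyz]
    simp [ratLoc, symmDiff, Finset.insert_sdiff_of_mem, Finset.insert_sdiff_of_notMem,
      singleton_sdiff_of_notMem, hxy.symm, hxz.symm, hyz.symm, *]
    norm_num
  have h3 : dRat C' C'' = 4 := by
    rw [dRat_eq hxy hxz hyz huniv]
    simp only [sum_powerset_singleton, sum_powerset_pair hxy, sum_powerset_pair hxz,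
      sum_powerset_pair hyz, sum_powerset_triple hxy hxz hyz]
    simp [ratLoc, symmDiff, Finset.insert_sdiff_of_mem, Finset.insert_sdiff_of_notMem,
      singleton_sdiff_of_notMem, hxy.symm, hxz.symm, hyz.symm, *]
    norm_num
  refine ⟨?_, h1, h2, h3, by rw [h2, h3]; norm_num⟩
  intro S
  rcases hs S with rfl | rfl | rfl | rfl | rfl | rfl | rfl | rfl <;>
    simp [*, Finset.subset_iff]
end

section
/- The rational distance d_rat fails Axiom A3: for X = {x,y,z} with x, y, z distinct, let C, C', D, D' be the quasi-choices mapping each singleton to itself and with C({x,y})={x}, C({x,z})=∅, C({y,z})={z}, C(X)={x,y}; C'({x,y})=∅, C'({x,z})=∅, C'({y,z})={z}, C'(X)={x,y}; D({x,y})={x}, D({x,z})=∅, D({y,z})=∅, D(X)={z}; D'({x,y})=∅, D'({x,z})=∅, D'({y,z})=∅, D'(X)={z}. Then, with 𝒳' = {{x,y},{x,z}}, C and C' agree on all menus outside 𝒳', D and D' agree on all menus outside 𝒳', C agrees with D on 𝒳', and C' agrees with D' on 𝒳', yet d_rat(C,C') = 1 while d_rat(D,D') = 2. -/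
theorem eq_of_subset_triple {X : Type*} [DecidableEq X] {x y z : X} {S : Finset X}
    (h : S ⊆ {x, y, z}) :
    S = ∅ ∨ S = {x} ∨ S = {y} ∨ S = {z} ∨ S = {x, y} ∨ S = {x, z} ∨ S = {y, z} ∨
      S = {x, y, z} := by
  have key : S = ({x, y, z} : Finset X).filter (· ∈ S) := by
    rw [Finset.filter_mem_eq_inter, Finset.inter_eq_right.mpr h]
  rw [Finset.filter_insert, Finset.filter_insert, Finset.filter_singleton] at key
  by_cases hx : x ∈ S <;> by_cases hy : y ∈ S <;> by_cases hz : z ∈ S <;>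
    simp only [hx, hy, hz, if_true, if_false, insert_empty_eq] at key <;> tauto

/-- The value at `B = {x, y}` survives localization at `A` exactly when the choice at `A` misses
`{x, y}` or `A = {x, y}`. At a smaller menu `B`, localizing `C` at `{x, y}` can only impose the
choice `{x}` on `B = {x}`, which both quasi-choices already make. -/
theorem card_symmDiff_ratLoc {X : Type*} [DecidableEq X] {x y : X}
    {C C' : Finset X → Finset X} (hoff : ∀ S, S ≠ {x, y} → C S = C' S)
    (hC : C {x, y} = {x}) (hC' : C' {x, y} = ∅) (hCx' : C' {x} = {x})
    {A B : Finset X} (hBA : B ⊆ A) :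
    (symmDiff (ratLoc C A B) (ratLoc C' A B)).card =
      if B = {x, y} ∧ (A = {x, y} ∨ C A ∩ {x, y} = ∅) then 1 else 0 := by
  unfold ratLoc
  by_cases hA : A = {x, y}
  · subst hA
    by_cases hB : B = {x, y}
    · subst hB
      have : ({x} : Finset X) ∩ {x, y} = {x} := by grind
      simp [hC, hC', this, symmDiff]
    · rw [hC, hC', ← hoff B hB]
      by_cases hx : x ∈ B
      · -- A proper subset of `{x, y}` containing `x` is `{x}`.
        have hBx : B = {x} := by
          have key : ∀ w ∈ B, w = x ∨ w = y := fun w hw => by simpa using hBA hw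
          have hy : y ∉ B := fun hy => hB (by ext w; grind)
          ext w
          grind
        have hCx : C B = {x} := by rw [hoff B hB, hBx, hCx']
        simp [hB, hCx, hx]
      · simp [hB, hx]
  · rw [← hoff A hA]
    by_cases hB : B = {x, y}
    · subst hB
      by_cases h : C A ∩ {x, y} = ∅
      · simp [h, hC, hC', symmDiff]
      · simp [Finset.nonempty_iff_ne_empty, h, hA]
    · simp [hoff B hB, hB]

theorem dRat_eq_of_agree_off_pair {X : Type*} [Fintype X] [DecidableEq X] {x y : X}
    {C C' : Finset X → Finset X} (hoff : ∀ S, S ≠ {x, y} → C S = C' S)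
    (hC : C {x, y} = {x}) (hC' : C' {x, y} = ∅) (hCx' : C' {x} = {x}) :
    dRat C C' = ((Finset.univ.filter fun A : Finset X =>
      {x, y} ⊆ A ∧ (A = {x, y} ∨ C A ∩ {x, y} = ∅)).card : ℝ) := by
  have inner : ∀ A : Finset X,
      ∑ B ∈ A.powerset, ((symmDiff (ratLoc C A B) (ratLoc C' A B)).card : ℝ) =
        if {x, y} ⊆ A ∧ (A = {x, y} ∨ C A ∩ {x, y} = ∅) then 1 else 0 := by
    intro A
    rw [Finset.sum_congr rfl fun B hB => by
      rw [card_symmDiff_ratLoc hoff hC hC' hCx' (Finset.mem_powerset.mp hB)]]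
    push_cast
    simp only [ite_and, Finset.sum_ite_eq', Finset.mem_powerset]
  unfold dRat
  rw [Finset.sum_congr rfl fun A _ => inner A, Finset.sum_boole, Finset.filter_filter]
  congr 2
  ext A
  simp only [Finset.mem_filter, Finset.mem_univ, true_and, and_iff_right_iff_imp]
  rintro ⟨h, -⟩ rfl
  simpa using h (Finset.mem_insert_self x {y})

/-- The rational distance `d_rat` fails Axiom A3: a concrete counterexample on a
three-element set, with `𝒳' = {{x,y}, {x,z}}`. -/
theorem dRat_fails_A3 {X : Type*} [Fintype X] [DecidableEq X] (x y z : X)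
    (hxy : x ≠ y) (hxz : x ≠ z) (hyz : y ≠ z)
    (huniv : (Finset.univ : Finset X) = {x, y, z})
    (C C' D D' : Finset X → Finset X)
    (hC0 : C ∅ = ∅) (hCx : C {x} = {x}) (hCy : C {y} = {y}) (hCz : C {z} = {z})
    (hCxy : C {x, y} = {x}) (hCxz : C {x, z} = ∅)
    (hCyz : C {y, z} = {z}) (hCX : C {x, y, z} = {x, y})
    (hC'0 : C' ∅ = ∅) (hC'x : C' {x} = {x}) (hC'y : C' {y} = {y}) (hC'z : C' {z} = {z})
    (hC'xy : C' {x, y} = ∅) (hC'xz : C' {x, z} = ∅)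
    (hC'yz : C' {y, z} = {z}) (hC'X : C' {x, y, z} = {x, y})
    (hD0 : D ∅ = ∅) (hDx : D {x} = {x}) (hDy : D {y} = {y}) (hDz : D {z} = {z})
    (hDxy : D {x, y} = {x}) (hDxz : D {x, z} = ∅)
    (hDyz : D {y, z} = ∅) (hDX : D {x, y, z} = {z})
    (hD'0 : D' ∅ = ∅) (hD'x : D' {x} = {x}) (hD'y : D' {y} = {y}) (hD'z : D' {z} = {z})
    (hD'xy : D' {x, y} = ∅) (hD'xz : D' {x, z} = ∅)
    (hD'yz : D' {y, z} = ∅) (hD'X : D' {x, y, z} = {z}) :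
    (∀ S : Finset X, S ≠ ∅ → S ∉ ({{x, y}, {x, z}} : Set (Finset X)) →
        C S = C' S ∧ D S = D' S) ∧
    (∀ S ∈ ({{x, y}, {x, z}} : Set (Finset X)), C S = D S ∧ C' S = D' S) ∧
    dRat C C' = 1 ∧ dRat D D' = 2 := by
  have cases : ∀ S : Finset X, S = ∅ ∨ S = {x} ∨ S = {y} ∨ S = {z} ∨ S = {x, y} ∨ S = {x, z} ∨
      S = {y, z} ∨ S = {x, y, z} := fun S =>
    eq_of_subset_triple (huniv ▸ Finset.subset_univ S)
  have offC : ∀ S, S ≠ {x, y} → C S = C' S := by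
    intro S hS
    rcases cases S with rfl | rfl | rfl | rfl | rfl | rfl | rfl | rfl <;> simp_all
  have offD : ∀ S, S ≠ {x, y} → D S = D' S := by
    intro S hS
    rcases cases S with rfl | rfl | rfl | rfl | rfl | rfl | rfl | rfl <;> simp_all
  have hne : ({x, y} : Finset X) ≠ {x, y, z} := by
    intro h
    have hz : z ∈ ({x, y} : Finset X) := h ▸ (by simp)
    simp [hxz.symm, hyz.symm] at hz
  have supersets : ∀ A : Finset X, {x, y} ⊆ A ↔ A = {x, y} ∨ A = {x, y, z} := by
    intro A
    constructor
    · intro h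
      have hx : x ∈ A := h (by simp)
      have hy : y ∈ A := h (by simp)
      rcases cases A with rfl | rfl | rfl | rfl | rfl | rfl | rfl | rfl <;> simp_all
    · rintro (rfl | rfl) <;> intro w <;> grind
  refine ⟨fun S _ hS => ?_, ?_, ?_, ?_⟩
  · have hS' : S ≠ {x, y} := fun h => hS (Or.inl h)
    exact ⟨offC S hS', offD S hS'⟩
  · rintro S (rfl | rfl)
    · exact ⟨hCxy.trans hDxy.symm, hC'xy.trans hD'xy.symm⟩
    · exact ⟨hCxz.trans hDxz.symm, hC'xz.trans hD'xz.symm⟩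
  · rw [dRat_eq_of_agree_off_pair offC hCxy hC'xy hC'x]
    have : (Finset.univ.filter fun A : Finset X =>
        {x, y} ⊆ A ∧ (A = {x, y} ∨ C A ∩ {x, y} = ∅)) = {{x, y}} := by
      ext A
      simp only [Finset.mem_filter, Finset.mem_univ, true_and, Finset.mem_singleton, supersets]
      constructor
      · rintro ⟨rfl | rfl, h | h⟩
        · rfl
        · rfl
        · exact h
        · simp [hCX] at h
      · rintro rfl
        simp
    rw [this]
    simp
  · rw [dRat_eq_of_agree_off_pair offD hDxy hD'xy hD'x]
    have : (Finset.univ.filter fun A : Finset X =>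
        {x, y} ⊆ A ∧ (A = {x, y} ∨ D A ∩ {x, y} = ∅)) = {{x, y}, {x, y, z}} := by
      ext A
      simp only [Finset.mem_filter, Finset.mem_univ, true_and, Finset.mem_insert,
        Finset.mem_singleton, supersets]
      refine ⟨fun h => h.1, fun h => ⟨h, h.imp_right ?_⟩⟩
      rintro rfl
      simp [hDX, hxz.symm, hyz.symm]
    rw [this, Finset.card_pair hne]
    norm_num
end

section
/- (Sen's theorem) A choice correspondence c over a finite set X is rationalizable, i.e., there exists an asymmetric binary relation ≻ on X such that c(A) = {x ∈ A : there is no a ∈ A with a ≻ x} for every nonempty A ⊆ X, if and only if c satisfies both Axiom α and Axiom γ. -/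
/-!
For the substantial direction, `c` is rationalized by its revealed base relation: `a` beats `b`
when `b ∉ c {a, b}`. This is asymmetric because `c {a, b}` is nonempty. Axiom α shows that an
element of `c A` is unbeaten in `A`. Conversely, an element `x` unbeaten in `A` is chosen from
every pair `{a, x}` with `a ∈ A`, hence from the union of these pairs, by repeated use of Axiom γ.
-/


/-- Sen's theorem: a choice correspondence over a finite set is rationalizable by
an asymmetric binary relation if and only if it satisfies Axiom α and Axiom γ. -/
theorem sen_rationalizability {X : Type*} [Fintype X] [DecidableEq X]
    (c : Finset X → Finset X)
    (hsub : ∀ A : Finset X, c A ⊆ A)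
    (hdec : ∀ A : Finset X, A.Nonempty → (c A).Nonempty) :
    (∃ r : X → X → Prop, (∀ a b : X, r a b → ¬ r b a) ∧
      ∀ A : Finset X, A.Nonempty → ∀ x : X,
        (x ∈ c A ↔ x ∈ A ∧ ∀ a ∈ A, ¬ r a x)) ↔
    ((∀ A B : Finset X, A ⊆ B → ∀ x ∈ A, x ∈ c B → x ∈ c A) ∧
     (∀ A B : Finset X, ∀ x : X, x ∈ c A → x ∈ c B → x ∈ c (A ∪ B))) := by
  constructor
  · rintro ⟨r, -, hr⟩
    refine ⟨fun A B hAB x hxA hxB => ?_, fun A B x hxA hxB => ?_⟩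
    · exact (hr A ⟨x, hxA⟩ x).2
        ⟨hxA, fun a ha => ((hr B ⟨x, hAB hxA⟩ x).1 hxB).2 a (hAB ha)⟩
    · have hA := (hr A ⟨x, hsub A hxA⟩ x).1 hxA
      have hB := (hr B ⟨x, hsub B hxB⟩ x).1 hxB
      have hx : x ∈ A ∪ B := Finset.mem_union_left B hA.1
      refine (hr (A ∪ B) ⟨x, hx⟩ x).2 ⟨hx, fun a ha => ?_⟩
      exact (Finset.mem_union.1 ha).elim (hA.2 a) (hB.2 a)
  · rintro ⟨hα, hγ⟩
    refine ⟨fun a b => b ∉ c {a, b}, fun a b hb ha => ?_, fun A _ x => ⟨fun hx => ?_, ?_⟩⟩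
    · obtain ⟨y, hy⟩ := hdec {a, b} ⟨a, by simp⟩
      have hy' := hsub _ hy
      rw [Finset.mem_insert, Finset.mem_singleton] at hy'
      rcases hy' with rfl | rfl
      · exact ha (by rwa [Finset.pair_comm])
      · exact hb hy
    · have hxA := hsub A hx
      refine ⟨hxA, fun a ha => not_not.2 (hα {a, x} A ?_ x (by simp) hx)⟩
      exact Finset.insert_subset ha (Finset.singleton_subset_iff.2 hxA)
    · rintro ⟨hxA, h⟩
      -- Adjoining `x` to the subset keeps `x` available in the base case of the induction.
      have key : ∀ S : Finset X, S ⊆ A → x ∈ c (insert x S) := by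
        intro S
        induction S using Finset.induction_on with
        | empty =>
          intro _
          simpa using not_not.1 (h x hxA)
        | insert a S _ ih =>
          intro hS
          obtain ⟨haA, hSA⟩ := Finset.insert_subset_iff.1 hS
          have hu := hγ {a, x} (insert x S) x (not_not.1 (h a haA)) (ih hSA)
          have e : ({a, x} : Finset X) ∪ insert x S = insert x (insert a S) := by
            ext y
            simp only [Finset.mem_union, Finset.mem_insert, Finset.mem_singleton]
            tauto
          rwa [e] at hu
      simpa [Finset.insert_eq_of_mem hxA] using key A subset_rfl
end

section
/- A quasi-choice C over a finite set X is rationalizable, i.e., there exists an arbitrary binary relation R on X such that C(A) = {x ∈ A : there is no a ∈ A with a R x} for every nonempty A ⊆ X, if and only if C satisfies both Axiom α and Axiom γ. -/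
/-- A quasi-choice over a finite set is rationalizable by an arbitrary binary
relation if and only if it satisfies Axiom α and Axiom γ. -/
theorem quasiChoice_rationalizability {X : Type*} [Fintype X] [DecidableEq X]
    (C : Finset X → Finset X) (hC : IsQuasiChoice C) :
    (∃ R : X → X → Prop,
      ∀ A : Finset X, A.Nonempty → ∀ x : X,
        (x ∈ C A ↔ x ∈ A ∧ ∀ a ∈ A, ¬ R a x)) ↔
    ((∀ A B : Finset X, A ⊆ B → ∀ x ∈ A, x ∈ C B → x ∈ C A) ∧
     (∀ A B : Finset X, ∀ x : X, x ∈ C A → x ∈ C B → x ∈ C (A ∪ B))) := by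
  constructor
  · rintro ⟨R, hR⟩
    refine ⟨fun A B hAB x hxA hxB => ?_, fun A B x hxA hxB => ?_⟩
    · rw [hR B ⟨x, hAB hxA⟩] at hxB
      rw [hR A ⟨x, hxA⟩]
      exact ⟨hxA, fun a ha => hxB.2 a (hAB ha)⟩
    · have hA := hC A hxA
      have hB := hC B hxB
      rw [hR A ⟨x, hA⟩] at hxA
      rw [hR B ⟨x, hB⟩] at hxB
      have hAB : x ∈ A ∪ B := Finset.mem_union_left B hA
      rw [hR (A ∪ B) ⟨x, hAB⟩]
      exact ⟨hAB, fun a ha => (Finset.mem_union.mp ha).elim (hxA.2 a) (hxB.2 a)⟩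
  · rintro ⟨hα, hγ⟩
    refine ⟨fun a x => x ∉ C {a, x}, fun A _ x => ⟨fun hx => ?_, fun ⟨hxA, h⟩ => ?_⟩⟩
    · refine ⟨hC A hx, fun a ha => not_not.mpr (hα _ A ?_ x (by simp) hx)⟩
      simp [Finset.insert_subset_iff, ha, hC A hx]
    · have key : ∀ S : Finset X, S ⊆ A → x ∈ C (insert x S) := by
        intro S
        induction S using Finset.induction_on with
        | empty => exact fun _ => by simpa using h x hxA
        | insert a S _ ih =>
          intro hS
          rw [Finset.insert_subset_iff] at hS
          have hunion := hγ _ _ x (not_not.mp (h a hS.1)) (ih hS.2)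
          have heq : ({a, x} : Finset X) ∪ insert x S = insert x (insert a S) := by
            ext y
            simp only [Finset.mem_union, Finset.mem_insert, Finset.mem_singleton]
            tauto
          rwa [heq] at hunion
      simpa [Finset.insert_eq_of_mem hxA] using key A subset_rfl
end

section
/- (Falmagne's theorem) A stochastic choice function p over a finite set X is RUM if and only if all its Block–Marschak polynomials are nonnegative, i.e., q_{a,T} ≥ 0 for every nonempty T ⊆ X and every a ∈ T. -/
/-!
Write `L_f a = {x | f x ≤ f a}` for the lower contour set of `a` under the ranking `f`, so that `f`
chooses `a ∈ A` from `A` exactly when `A ⊆ L_f a`.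

*Necessity.* Möbius inversion on the Boolean lattice shows that the Block–Marschak polynomial at
`(a, T)` of the choice function of a single ranking `f` is the indicator of `T = L_f a`
(`bm_order`). The polynomials of a mixture of rankings are mixtures of these indicators.

*Sufficiency.* Read `BM p a T` as a flow along the edge `T → T \ {a}` of the Boolean lattice. Since
the choice probabilities sum to the same constant `c` over every menu, the flow is conserved at
every nonempty proper subset (`bm_conservation`). Hence, if `c > 0`, one can walk from `X` down to
`∅` along edges of positive flow; such a walk is a ranking `f` with `BM p a (L_f a) > 0` for all `a`
(`exists_positive_order`). Subtracting from `p` the choice function of `f` times the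
least of these flows keeps every Block–Marschak polynomial nonnegative and makes at least one more
of them vanish, so the process stops after finitely many steps (`exists_mixture`). It stops at `c = 0`, where
Möbius inversion (`sum_bm`) gives `p ≥ 0`, hence `p = 0`.
-/

/-- A stochastic choice function over `X`: `p a A` is the probability of choosing
`a` from the nonempty menu `A`. -/
def IsSCF {X : Type*} [Fintype X] [DecidableEq X] (p : X → Finset X → ℝ) : Prop :=
  (∀ (a : X) (A : Finset X), A.Nonempty → 0 ≤ p a A ∧ p a A ≤ 1) ∧
  (∀ A : Finset X, A.Nonempty → ∑ a ∈ A, p a A = 1) ∧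
  (∀ (a : X) (A : Finset X), A.Nonempty → a ∉ A → p a A = 0)

/-- The Block–Marschak polynomial `q_{a,T}` of `p`. -/
noncomputable def BM {X : Type*} [Fintype X] [DecidableEq X]
    (p : X → Finset X → ℝ) (a : X) (T : Finset X) : ℝ :=
  ∑ U ∈ Finset.univ.filter (fun U : Finset X => T ⊆ U),
    (-1 : ℝ) ^ (U \ T).card * p a U

/-- `p` satisfies the random utility model: it is induced by a probability
distribution on the (finite) set of strict linear orders on `X`, here encoded as
rankings `f : X ≃ Fin |X|` (with `a` preferred to `x` iff `f x < f a`). -/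
def IsRUM {X : Type*} [Fintype X] [DecidableEq X] (p : X → Finset X → ℝ) : Prop :=
  ∃ Pr : (X ≃ Fin (Fintype.card X)) → ℝ,
    (∀ f, 0 ≤ Pr f) ∧ (∑ f : X ≃ Fin (Fintype.card X), Pr f = 1) ∧
    ∀ A : Finset X, A.Nonempty → ∀ a ∈ A,
      p a A = ∑ f ∈ Finset.univ.filter
        (fun f : X ≃ Fin (Fintype.card X) => ∀ x ∈ A, x ≠ a → f x < f a), Pr f

section

variable {X : Type*} [Fintype X] [DecidableEq X]

/-! ### Möbius inversion on the Boolean lattice -/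

/-- The Möbius identity of the Boolean lattice, summing over the interval from `A` to `U` with signs
counted from `A`. -/
lemma sum_Icc_left (A U : Finset X) (h : A ⊆ U) :
    ∑ T ∈ Finset.univ.filter (fun T => A ⊆ T ∧ T ⊆ U), (-1 : ℝ) ^ (T \ A).card
      = if A = U then 1 else 0 := by
  have h1 : ∑ T ∈ Finset.univ.filter (fun T => A ⊆ T ∧ T ⊆ U), (-1 : ℝ) ^ (T \ A).card
      = ∑ S ∈ (U \ A).powerset, (-1 : ℝ) ^ S.card := by
    refine Finset.sum_nbij' (fun T => T \ A) (fun S => S ∪ A) ?_ ?_ ?_ ?_ ?_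
    · intro T hT
      simp only [Finset.mem_filter, Finset.mem_univ, true_and] at hT
      simp only [Finset.mem_powerset]
      exact Finset.sdiff_subset_sdiff hT.2 le_rfl
    · intro S hS
      simp only [Finset.mem_powerset] at hS
      simp only [Finset.mem_filter, Finset.mem_univ, true_and]
      exact ⟨Finset.subset_union_right,
        Finset.union_subset (hS.trans Finset.sdiff_subset) h⟩
    · intro T hT
      simp only [Finset.mem_filter, Finset.mem_univ, true_and] at hT
      exact Finset.sdiff_union_of_subset hT.1
    · intro S hS
      simp only [Finset.mem_powerset] at hS
      ext x
      have := @hS x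
      simp only [Finset.mem_sdiff, Finset.mem_union] at this ⊢
      tauto
    · intro T _
      rfl
  have h2 := congrArg (Int.cast : ℤ → ℝ) (Finset.sum_powerset_neg_one_pow_card (x := U \ A))
  push_cast at h2
  rw [h1, h2]
  have h3 : U \ A = ∅ ↔ A = U := by
    rw [Finset.sdiff_eq_empty_iff_subset]
    exact ⟨fun h' => h.antisymm h', fun h' => h' ▸ le_rfl⟩
  simp only [h3]

/-- The same identity with signs counted from the upper end `U`. -/
lemma sum_Icc_right (A U : Finset X) (h : A ⊆ U) :
    ∑ T ∈ Finset.univ.filter (fun T => A ⊆ T ∧ T ⊆ U), (-1 : ℝ) ^ (U \ T).card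
      = if A = U then 1 else 0 := by
  have h1 : ∀ T ∈ Finset.univ.filter (fun T => A ⊆ T ∧ T ⊆ U), (-1 : ℝ) ^ (U \ T).card
      = (-1 : ℝ) ^ (U \ A).card * (-1 : ℝ) ^ (T \ A).card := by
    intro T hT
    simp only [Finset.mem_filter, Finset.mem_univ, true_and] at hT
    have e1 := Finset.card_sdiff_add_card_eq_card hT.1
    have e2 := Finset.card_sdiff_add_card_eq_card hT.2
    have e3 := Finset.card_sdiff_add_card_eq_card h
    have e : (U \ A).card = (U \ T).card + (T \ A).card := by omega
    rw [e, pow_add, mul_assoc, ← mul_pow]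
    simp
  rw [Finset.sum_congr rfl h1, ← Finset.mul_sum, sum_Icc_left A U h]
  split_ifs with hA
  · simp [hA]
  · simp

/-- Möbius inversion: choice probabilities are recovered by summing Block–Marschak polynomials. -/
lemma sum_bm (p : X → Finset X → ℝ) (a : X) (A : Finset X) :
    ∑ T ∈ Finset.univ.filter (fun T => A ⊆ T), BM p a T = p a A := by
  simp only [BM]
  rw [Finset.sum_comm' (t' := Finset.univ.filter (fun U => A ⊆ U))
    (s' := fun U => Finset.univ.filter (fun T => A ⊆ T ∧ T ⊆ U))]
  · have : ∀ U ∈ Finset.univ.filter (fun U => A ⊆ U),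
        ∑ T ∈ Finset.univ.filter (fun T => A ⊆ T ∧ T ⊆ U), (-1 : ℝ) ^ (U \ T).card * p a U
          = if A = U then p a U else 0 := by
      intro U hU
      simp only [Finset.mem_filter, Finset.mem_univ, true_and] at hU
      rw [← Finset.sum_mul, sum_Icc_right A U hU]
      simp
    rw [Finset.sum_congr rfl this]
    simp
  · intro T U
    simp only [Finset.mem_filter, Finset.mem_univ, true_and]
    exact ⟨fun ⟨h1, h2⟩ => ⟨⟨h1, h2⟩, h1.trans h2⟩, fun ⟨h1, _⟩ => h1⟩

/-! ### Choice functions of rankings and their mixtures -/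

/-- The lower contour set of `a` under the ranking `f`, including `a` itself. -/
def lowerSet (f : X ≃ Fin (Fintype.card X)) (a : X) : Finset X :=
  Finset.univ.filter (fun x => f x ≤ f a)

/-- The choice function of the ranking `f`; only its values at `a ∈ A` are meaningful. -/
noncomputable def orderChoice (f : X ≃ Fin (Fintype.card X)) (a : X) (A : Finset X) : ℝ :=
  if A ⊆ lowerSet f a then 1 else 0

lemma best_iff (f : X ≃ Fin (Fintype.card X)) (a : X) (A : Finset X) :
    (∀ x ∈ A, x ≠ a → f x < f a) ↔ A ⊆ lowerSet f a := by
  simp only [lowerSet, Finset.subset_iff, Finset.mem_filter, Finset.mem_univ, true_and]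
  constructor
  · intro h x hx
    by_cases hxa : x = a
    · rw [hxa]
    · exact (h x hx hxa).le
  · intro h x hx hxa
    exact lt_of_le_of_ne (h hx) (fun e => hxa (f.injective e))

/-- The flow of a single ranking is the indicator of its chain of lower contour sets. -/
lemma bm_order (f : X ≃ Fin (Fintype.card X)) (a : X) (T : Finset X) :
    BM (orderChoice f) a T = if T = lowerSet f a then 1 else 0 := by
  simp only [BM, orderChoice, mul_ite, mul_one, mul_zero]
  rw [← Finset.sum_filter, Finset.filter_filter]
  by_cases h : T ⊆ lowerSet f a
  · exact sum_Icc_left T _ h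
  · rw [if_neg (fun e : T = lowerSet f a => h e.subset)]
    refine Finset.sum_eq_zero fun U hU => ?_
    simp only [Finset.mem_filter, Finset.mem_univ, true_and] at hU
    exact absurd (hU.1.trans hU.2) h

lemma sum_orderChoice (f : X ≃ Fin (Fintype.card X)) (A : Finset X) (hA : A.Nonempty) :
    ∑ a ∈ A, orderChoice f a A = 1 := by
  obtain ⟨m, hm, hmax⟩ := Finset.exists_max_image A f hA
  rw [Finset.sum_eq_single_of_mem m hm]
  · rw [orderChoice, if_pos]
    intro x hx
    simpa [lowerSet] using hmax x hx
  · intro b hb hbm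
    rw [orderChoice, if_neg]
    intro h
    have h1 := h hm
    simp only [lowerSet, Finset.mem_filter, Finset.mem_univ, true_and] at h1
    exact hbm (f.injective (le_antisymm (hmax b hb) h1))

lemma bm_congr (p p' : X → Finset X → ℝ) (a : X) (T : Finset X)
    (h : ∀ U, T ⊆ U → p a U = p' a U) : BM p a T = BM p' a T := by
  refine Finset.sum_congr rfl fun U hU => ?_
  simp only [Finset.mem_filter, Finset.mem_univ, true_and] at hU
  rw [h U hU]

lemma bm_mixture (Pr : (X ≃ Fin (Fintype.card X)) → ℝ) (a : X) (T : Finset X) :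
    BM (fun a A => ∑ f, Pr f * orderChoice f a A) a T
      = ∑ f, Pr f * BM (orderChoice f) a T := by
  simp only [BM, Finset.mul_sum]
  rw [Finset.sum_comm]
  refine Finset.sum_congr rfl fun f _ => Finset.sum_congr rfl fun U _ => by ring

lemma bm_sub (p : X → Finset X → ℝ) (f : X ≃ Fin (Fintype.card X)) (ε : ℝ) (a : X)
    (T : Finset X) :
    BM (fun a A => p a A - ε * orderChoice f a A) a T
      = BM p a T - if T = lowerSet f a then ε else 0 := by
  have h : (if T = lowerSet f a then ε else 0) = ε * BM (orderChoice f) a T := by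
    rw [bm_order]; simp
  rw [h]
  simp only [BM, Finset.mul_sum, ← Finset.sum_sub_distrib]
  exact Finset.sum_congr rfl fun U _ => by ring

/-! ### Conservation of flow and positive walks -/

/-- The mass leaving a nonempty proper subset equals the mass entering it. -/
lemma bm_conservation (p : X → Finset X → ℝ) (c : ℝ)
    (hc : ∀ A : Finset X, A.Nonempty → ∑ a ∈ A, p a A = c)
    (T : Finset X) (hT : T.Nonempty) (hT' : T ≠ Finset.univ) :
    ∑ a ∈ T, BM p a T = ∑ b ∈ Tᶜ, BM p b (insert b T) := by
  have h1 : ∀ b ∈ Tᶜ, BM p b (insert b T) =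
      ∑ U ∈ Finset.univ.filter (fun U => T ⊆ U),
        if b ∈ U then -((-1 : ℝ) ^ (U \ T).card * p b U) else 0 := by
    intro b hb
    rw [Finset.mem_compl] at hb
    rw [BM, ← Finset.sum_filter, Finset.filter_filter]
    refine Finset.sum_congr ?_ fun U hU => ?_
    · ext U
      simp only [Finset.mem_filter, Finset.mem_univ, true_and, Finset.insert_subset_iff]
      tauto
    · simp only [Finset.mem_filter, Finset.mem_univ, true_and] at hU
      have e1 := Finset.card_sdiff_add_card_eq_card hU.1
      have e2 := Finset.card_sdiff_add_card_eq_card (Finset.insert_subset hU.2 hU.1)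
      have e3 := Finset.card_insert_of_notMem hb
      have e : (U \ T).card = (U \ insert b T).card + 1 := by omega
      rw [e, pow_succ]
      ring
  rw [Finset.sum_congr rfl h1, Finset.sum_comm, ← sub_eq_zero]
  simp only [BM]
  rw [Finset.sum_comm, ← Finset.sum_sub_distrib]
  have h2 : ∀ U ∈ Finset.univ.filter (fun U => T ⊆ U),
      (∑ a ∈ T, (-1 : ℝ) ^ (U \ T).card * p a U
        - ∑ b ∈ Tᶜ, if b ∈ U then -((-1 : ℝ) ^ (U \ T).card * p b U) else 0)
      = (-1 : ℝ) ^ (U \ T).card * c := by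
    intro U hU
    simp only [Finset.mem_filter, Finset.mem_univ, true_and] at hU
    have e : Tᶜ.filter (fun b => b ∈ U) = U \ T := by
      ext x
      simp [and_comm]
    rw [← Finset.sum_filter, e, Finset.sum_neg_distrib, sub_neg_eq_add, ← Finset.mul_sum,
      ← Finset.mul_sum, ← mul_add, add_comm, Finset.sum_sdiff hU, hc U (hT.mono hU)]
  rw [Finset.sum_congr rfl h2, ← Finset.sum_mul]
  have h3 := sum_Icc_left T Finset.univ (Finset.subset_univ T)
  simp only [Finset.subset_univ, and_true, if_neg hT'] at h3
  rw [h3, zero_mul]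

/-- A positive-flow walk from `T` down to `∅`, encoded by an injection of `T` into `{0, …, |T| - 1}`
whose initial segments are the subsets visited. -/
lemma exists_positive_walk (p : X → Finset X → ℝ) (c : ℝ)
    (hc : ∀ A : Finset X, A.Nonempty → ∑ a ∈ A, p a A = c)
    (hq : ∀ T : Finset X, T.Nonempty → ∀ a ∈ T, 0 ≤ BM p a T) (n : ℕ) :
    ∀ T : Finset X, T.card = n → (T.Nonempty → 0 < ∑ a ∈ T, BM p a T) →
      ∃ g : X → ℕ, Set.InjOn g T ∧ (∀ a ∈ T, g a < n) ∧
        ∀ a ∈ T, 0 < BM p a (T.filter (fun x => g x ≤ g a)) := by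
  induction n with
  | zero =>
    intro T hT _
    rw [Finset.card_eq_zero] at hT
    subst hT
    exact ⟨fun _ => 0, by simp⟩
  | succ n ih =>
    intro T hT hpos
    have hne : T.Nonempty := Finset.card_pos.mp (by omega)
    obtain ⟨b, hb, hbpos⟩ : ∃ b ∈ T, 0 < BM p b T := by
      by_contra! h
      exact absurd (hpos hne) (not_lt.mpr (Finset.sum_nonpos h))
    have hins : insert b (T.erase b) = T := Finset.insert_erase hb
    have hpos' : (T.erase b).Nonempty → 0 < ∑ a ∈ T.erase b, BM p a (T.erase b) := by
      intro hne'
      have hbn : b ∉ T.erase b := Finset.notMem_erase b T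
      rw [bm_conservation p c hc _ hne' (fun h => hbn (h ▸ Finset.mem_univ b))]
      refine Finset.sum_pos' (fun x _ => hq _ (Finset.insert_nonempty _ _) x
        (Finset.mem_insert_self _ _)) ⟨b, by simp, ?_⟩
      rwa [hins]
    obtain ⟨g, hginj, hglt, hgpos⟩ := ih (T.erase b)
      (by rw [Finset.card_erase_of_mem hb]; omega) hpos'
    have hlt : ∀ x ∈ T, x ≠ b → g x < n := fun x hx hxb =>
      hglt x (Finset.mem_erase.mpr ⟨hxb, hx⟩)
    -- The first alternative removed from `T` gets the top rank.
    refine ⟨fun x => if x = b then n else g x, ?_, ?_, ?_⟩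
    · intro x hx y hy hxy
      simp only at hxy
      by_cases hxb : x = b <;> by_cases hyb : y = b
      · rw [hxb, hyb]
      · have := hlt y hy hyb
        simp only [hxb, hyb, if_true, if_false] at hxy
        omega
      · have := hlt x hx hxb
        simp only [hxb, hyb, if_true, if_false] at hxy
        omega
      · simp only [hxb, hyb, if_false] at hxy
        exact hginj (by simpa [hxb] using hx) (by simpa [hyb] using hy) hxy
    · intro a ha
      by_cases hab : a = b
      · simp [hab]
      · have := hlt a ha hab
        simp only [hab, if_false]
        omega
    · intro a ha
      by_cases hab : a = b
      · have e : T.filter (fun x => (if x = b then n else g x) ≤ if a = b then n else g a) = T := by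
          refine Finset.filter_true_of_mem fun x hx => ?_
          by_cases hxb : x = b
          · simp [hxb, hab]
          · simp only [hxb, hab, if_true, if_false]
            exact (hlt x hx hxb).le
        rw [e, hab]
        exact hbpos
      · have e : T.filter (fun x => (if x = b then n else g x) ≤ if a = b then n else g a)
            = (T.erase b).filter (fun x => g x ≤ g a) := by
          ext x
          have h1 := hlt a ha hab
          by_cases hxb : x = b
          · simp [hxb, hab, h1]
          · simp [hxb, hab]
        rw [e]
        exact hgpos a (Finset.mem_erase.mpr ⟨hab, ha⟩)

lemma bm_univ (p : X → Finset X → ℝ) (a : X) : BM p a Finset.univ = p a Finset.univ := by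
  simp [BM, Finset.univ_subset_iff, Finset.filter_eq']

lemma exists_positive_order (p : X → Finset X → ℝ) (c : ℝ) (hcpos : 0 < c)
    (hc : ∀ A : Finset X, A.Nonempty → ∑ a ∈ A, p a A = c)
    (hq : ∀ T : Finset X, T.Nonempty → ∀ a ∈ T, 0 ≤ BM p a T) :
    ∃ f : X ≃ Fin (Fintype.card X), ∀ a, 0 < BM p a (lowerSet f a) := by
  obtain ⟨g, hginj, hglt, hgpos⟩ := exists_positive_walk p c hc hq (Fintype.card X)
    Finset.univ rfl (fun h => by simp only [bm_univ]; rwa [hc _ h])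
  have hbij : Function.Bijective
      (fun x => (⟨g x, hglt x (Finset.mem_univ x)⟩ : Fin (Fintype.card X))) := by
    rw [Fintype.bijective_iff_injective_and_card]
    refine ⟨fun x y hxy => hginj (by simp) (by simp) (Fin.mk.inj hxy), by simp⟩
  exact ⟨Equiv.ofBijective _ hbij, fun a => hgpos a (Finset.mem_univ a)⟩

/-! ### Decomposition into rankings -/

/-- Flow decomposition into rankings, by induction on a bound `n` for the number of edges carrying flow. -/
lemma exists_mixture [Nonempty X] (n : ℕ) :
    ∀ (p : X → Finset X → ℝ) (c : ℝ),
      (∀ A : Finset X, A.Nonempty → ∑ a ∈ A, p a A = c) →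
      (∀ T : Finset X, T.Nonempty → ∀ a ∈ T, 0 ≤ BM p a T) →
      (Finset.univ.filter (fun e : X × Finset X => e.1 ∈ e.2 ∧ BM p e.1 e.2 ≠ 0)).card ≤ n →
      ∃ Pr : (X ≃ Fin (Fintype.card X)) → ℝ, (∀ f, 0 ≤ Pr f) ∧ ∑ f, Pr f = c ∧
        ∀ A : Finset X, ∀ a ∈ A, p a A = ∑ f, Pr f * orderChoice f a A := by
  induction n with
  | zero =>
    intro p c hc hq hn
    have hz : ∀ A : Finset X, ∀ a ∈ A, p a A = 0 := by
      intro A a ha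
      rw [← sum_bm p a A]
      refine Finset.sum_eq_zero fun T hT => ?_
      simp only [Finset.mem_filter, Finset.mem_univ, true_and] at hT
      by_contra hne
      have : (a, T) ∈ Finset.univ.filter
          (fun e : X × Finset X => e.1 ∈ e.2 ∧ BM p e.1 e.2 ≠ 0) := by
        simp [hT ha, hne]
      rw [Finset.card_eq_zero.mp (Nat.le_zero.mp hn)] at this
      simp at this
    refine ⟨fun _ => 0, fun _ => le_rfl, ?_, fun A a ha => by simp [hz A a ha]⟩
    rw [← hc Finset.univ Finset.univ_nonempty, Finset.sum_eq_zero (hz Finset.univ)]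
    simp
  | succ n ih =>
    intro p c hc hq hn
    have hp0 : ∀ A : Finset X, ∀ a ∈ A, 0 ≤ p a A := by
      intro A a ha
      rw [← sum_bm p a A]
      refine Finset.sum_nonneg fun T hT => ?_
      simp only [Finset.mem_filter, Finset.mem_univ, true_and] at hT
      exact hq T ⟨a, hT ha⟩ a (hT ha)
    have hc0 : 0 ≤ c := by
      rw [← hc Finset.univ Finset.univ_nonempty]
      exact Finset.sum_nonneg (hp0 Finset.univ)
    rcases hc0.eq_or_lt with h0 | hcpos
    · refine ⟨fun _ => 0, fun _ => le_rfl, by simp [← h0], fun A a ha => ?_⟩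
      have := hc A ⟨a, ha⟩
      rw [← h0, Finset.sum_eq_zero_iff_of_nonneg (hp0 A)] at this
      simp [this a ha]
    obtain ⟨f, hf⟩ := exists_positive_order p c hcpos hc hq
    obtain ⟨m, -, hm⟩ := Finset.exists_min_image Finset.univ
      (fun a => BM p a (lowerSet f a)) Finset.univ_nonempty
    set ε := BM p m (lowerSet f m) with hε
    have hmem : ∀ a, a ∈ lowerSet f a := fun a => by simp [lowerSet]
    obtain ⟨Pr, hPr0, hPr1, hPr⟩ := ih (fun a A => p a A - ε * orderChoice f a A) (c - ε)
      (by
        intro A hA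
        rw [Finset.sum_sub_distrib, hc A hA, ← Finset.mul_sum, sum_orderChoice f A hA, mul_one])
      (by
        intro T hT a ha
        rw [bm_sub]
        split_ifs with h
        · rw [h]
          linarith [hm a (Finset.mem_univ a)]
        · simpa using hq T hT a ha)
      (by
        -- No edge gains flow, and the edge at the minimiser `m` loses all of it.
        refine Nat.le_of_lt_succ (lt_of_lt_of_le (Finset.card_lt_card ?_) hn)
        rw [Finset.ssubset_iff_of_subset]
        · refine ⟨(m, lowerSet f m), ?_, ?_⟩
          · simp only [Finset.mem_filter, Finset.mem_univ, true_and]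
            exact ⟨hmem m, (hf m).ne'⟩
          · simp only [Finset.mem_filter, Finset.mem_univ, true_and, bm_sub, if_true, ← hε]
            simp
        · rintro ⟨a, T⟩ h
          simp only [Finset.mem_filter, Finset.mem_univ, true_and, bm_sub] at h ⊢
          refine ⟨h.1, ?_⟩
          by_cases hT : T = lowerSet f a
          · rw [hT]
            exact (hf a).ne'
          · simpa [hT] using h.2)
    refine ⟨fun f' => Pr f' + if f' = f then ε else 0, fun f' => ?_, ?_, fun A a ha => ?_⟩
    · have := hPr0 f'
      have := hf m
      dsimp only
      split_ifs <;> linarith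
    · rw [Finset.sum_add_distrib, hPr1]
      simp
    · have := hPr A a ha
      simp only [add_mul, Finset.sum_add_distrib, ite_mul, zero_mul, Finset.sum_ite_eq',
        Finset.mem_univ, if_true]
      linarith

lemma sum_filter_best (Pr : (X ≃ Fin (Fintype.card X)) → ℝ) (a : X) (A : Finset X) :
    ∑ f ∈ Finset.univ.filter
        (fun f : X ≃ Fin (Fintype.card X) => ∀ x ∈ A, x ≠ a → f x < f a), Pr f
      = ∑ f, Pr f * orderChoice f a A := by
  simp only [best_iff, orderChoice, mul_ite, mul_one, mul_zero, Finset.sum_filter]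

end

/-- Falmagne's theorem: a stochastic choice function over a finite set is RUM
if and only if all its Block–Marschak polynomials are nonnegative. -/
theorem falmagne {X : Type*} [Fintype X] [DecidableEq X]
    (p : X → Finset X → ℝ) (hp : IsSCF p) :
    IsRUM p ↔ ∀ T : Finset X, T.Nonempty → ∀ a ∈ T, 0 ≤ BM p a T := by
  constructor
  · rintro ⟨Pr, hPr0, -, hPr⟩ T hT a ha
    rw [bm_congr p (fun a A => ∑ f, Pr f * orderChoice f a A) a T
      (fun U hU => by rw [hPr U (hT.mono hU) a (hU ha), sum_filter_best]), bm_mixture]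
    refine Finset.sum_nonneg fun f _ => mul_nonneg (hPr0 f) ?_
    rw [bm_order]
    split_ifs <;> norm_num
  · intro hq
    rcases isEmpty_or_nonempty X with hX | hX
    · -- The empty set has exactly one ranking.
      have : Unique (X ≃ Fin (Fintype.card X)) :=
        { default := Fintype.equivFin X, uniq := fun f => Equiv.ext fun x => isEmptyElim x }
      exact ⟨fun _ => 1, fun _ => zero_le_one, by simp, fun A _ a => isEmptyElim a⟩
    · obtain ⟨Pr, h0, h1, h⟩ := exists_mixture _ p 1 hp.2.1 hq le_rfl
      exact ⟨Pr, h0, h1, fun A _ a ha => by rw [sum_filter_best, h A a ha]⟩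
end

section
/- If a stochastic choice function p over a finite set X is RUM, then all its Block–Marschak polynomials are nonnegative: q_{a,T} ≥ 0 for every nonempty T ⊆ X and every a ∈ T. -/
/-- The alternating sum over the Boolean interval `[T, D]` is concentrated at `D = T`; the
interval is empty if `T ⊆ D` fails. -/
theorem sum_Icc_neg_one_pow {X : Type*} [DecidableEq X] (T D : Finset X) :
    ∑ U ∈ Finset.Icc T D, (-1 : ℝ) ^ (U \ T).card = if D = T then 1 else 0 := by
  by_cases h : T ⊆ D
  · have key : ∑ U ∈ Finset.Icc T D, (-1 : ℝ) ^ (U \ T).card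
        = ∑ V ∈ (D \ T).powerset, (-1 : ℝ) ^ V.card := by
      refine Finset.sum_bij' (fun U _ => U \ T) (fun V _ => V ∪ T) ?_ ?_ ?_ ?_ ?_
      · intro U hU
        exact Finset.mem_powerset.2 (Finset.sdiff_subset_sdiff (Finset.mem_Icc.1 hU).2 le_rfl)
      · intro V hV
        exact Finset.mem_Icc.2 ⟨Finset.subset_union_right, Finset.union_subset
          ((Finset.mem_powerset.1 hV).trans Finset.sdiff_subset) h⟩
      · intro U hU
        exact Finset.sdiff_union_of_subset (Finset.mem_Icc.1 hU).1
      · intro V hV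
        have hVT : Disjoint V T :=
          Finset.sdiff_disjoint.mono_left (Finset.mem_powerset.1 hV)
        simp [Finset.union_sdiff_right, hVT.sdiff_eq_left]
      · intro U hU
        rfl
    have hz := congrArg (Int.cast : ℤ → ℝ) (Finset.sum_powerset_neg_one_pow_card (x := D \ T))
    push_cast at hz
    rw [key, hz]
    have hiff : D \ T = ∅ ↔ D = T :=
      Finset.sdiff_eq_empty_iff_subset.trans ⟨fun h' => h'.antisymm h, fun h' => h'.le⟩
    simp only [hiff]
  · have hne : D ≠ T := fun h' => h h'.ge
    rw [Finset.Icc_eq_empty h, Finset.sum_empty, if_neg hne]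

/-- Block–Marschak: if a stochastic choice function over a finite set is RUM,
then all its Block–Marschak polynomials are nonnegative. -/
theorem bm_nonneg_of_rum {X : Type*} [Fintype X] [DecidableEq X]
    (p : X → Finset X → ℝ) (hp : IsSCF p) (hrum : IsRUM p) :
    ∀ T : Finset X, T.Nonempty → ∀ a ∈ T, 0 ≤ BM p a T := by
  obtain ⟨Pr, hPr, -, hrep⟩ := hrum
  intro T _ a ha
  let D : (X ≃ Fin (Fintype.card X)) → Finset X :=
    fun f => Finset.univ.filter (fun x => x ≠ a → f x < f a)
  have hBM : BM p a T
      = ∑ f, Pr f * ∑ U ∈ Finset.Icc T (D f), (-1 : ℝ) ^ (U \ T).card := by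
    have hD : ∀ f, Finset.Icc T (D f)
        = (Finset.univ.filter (fun U : Finset X => T ⊆ U)).filter
          (fun U => ∀ x ∈ U, x ≠ a → f x < f a) := by
      intro f
      ext U
      simp [D, Finset.subset_iff]
    simp only [hD, Finset.sum_filter _ (f := fun U : Finset X => (-1 : ℝ) ^ (U \ T).card),
      Finset.mul_sum]
    rw [BM, Finset.sum_comm]
    refine Finset.sum_congr rfl fun U hU => ?_
    have hTU : T ⊆ U := (Finset.mem_filter.1 hU).2
    rw [hrep U ⟨a, hTU ha⟩ a (hTU ha), Finset.sum_filter, Finset.mul_sum]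
    refine Finset.sum_congr rfl fun f _ => ?_
    split_ifs <;> ring
  rw [hBM]
  refine Finset.sum_nonneg fun f _ => mul_nonneg (hPr f) ?_
  rw [sum_Icc_neg_one_pow]
  split_ifs <;> norm_num
end

section
/- Let ≻ be an asymmetric binary relation on a set X. If ≻ is (m,n)-Ferrers and m', n' are integers with m ≥ m' ≥ n' ≥ 1 and n ≥ n', then ≻ is (m',n')-Ferrers. -/
/-!
Asymmetry makes `≻` irreflexive, so its canonical completion `≿` is reflexive. Repeating the last
term therefore turns a `≿`-chain of length `k` into a longer one with the same first and last terms.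
Applying the `(m,n)`-Ferrers property to the padded chains gives the `(m',n')`-Ferrers property.
-/

/-- The canonical completion `≿` of a strict preference `≻`:
`x ≿ y` iff `¬(y ≻ x)`. -/
def CanonComp {X : Type*} (succ : X → X → Prop) (a b : X) : Prop :=
  ¬ succ b a

/-- `≻` is `(m,n)`-Ferrers: whenever `x₁ ≿ … ≿ x_m` and `y₁ ≿ … ≿ y_n`
(elements not necessarily distinct), either `x₁ ≿ y_n` or `y₁ ≿ x_m`.
Chains are encoded by functions `ℕ → X`, with `x i` standing for `x_{i+1}`. -/
def MNFerrers {X : Type*} (succ : X → X → Prop) (m n : ℕ) : Prop :=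
  ∀ x y : ℕ → X,
    (∀ i : ℕ, i + 1 < m → CanonComp succ (x i) (x (i + 1))) →
    (∀ i : ℕ, i + 1 < n → CanonComp succ (y i) (y (i + 1))) →
    CanonComp succ (x 0) (y (n - 1)) ∨ CanonComp succ (y 0) (x (m - 1))

/-- Monotonicity of the `(m,n)`-Ferrers properties: if an asymmetric relation is
`(m,n)`-Ferrers and `m ≥ m' ≥ n' ≥ 1`, `n ≥ n'`, then it is `(m',n')`-Ferrers. -/
theorem mnFerrers_mono {X : Type*} (succ : X → X → Prop)
    (hasym : ∀ a b : X, succ a b → ¬ succ b a)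
    (m n m' n' : ℕ) (hmn : n ≤ m) (hm' : m' ≤ m) (hm'n' : n' ≤ m') (hn' : 1 ≤ n')
    (hnn' : n' ≤ n) (hF : MNFerrers succ m n) :
    MNFerrers succ m' n' := by
  have hrefl : ∀ a : X, CanonComp succ a a := fun a h => hasym a a h h
  -- A chain of length `k` is extended to any length by repeating its last term.
  have hpad : ∀ (k : ℕ) (z : ℕ → X),
      (∀ i : ℕ, i + 1 < k → CanonComp succ (z i) (z (i + 1))) →
      ∀ i : ℕ, CanonComp succ (z (min i (k - 1))) (z (min (i + 1) (k - 1))) := by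
    intro k z hz i
    by_cases hi : i + 1 < k
    · rw [min_eq_left (by omega), min_eq_left (by omega)]
      exact hz i hi
    · rw [min_eq_right (by omega), min_eq_right (by omega)]
      exact hrefl _
  intro x y hx hy
  have h := hF (fun i => x (min i (m' - 1))) (fun i => y (min i (n' - 1)))
    (fun i _ => hpad m' x hx i) (fun i _ => hpad n' y hy i)
  have hm : min (m - 1) (m' - 1) = m' - 1 := min_eq_right (by omega)
  have hn : min (n - 1) (n' - 1) = n' - 1 := min_eq_right (by omega)
  simpa only [Nat.zero_min, hm, hn] using h
end

section
/- Let ≻ be an asymmetric binary relation on a set X. If ≻ is (3,3)-Ferrers, then ≻ is (m,n)-Ferrers for all integers m ≥ n ≥ 1. -/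
theorem CanonComp.trans_of_33Ferrers {X : Type*} {succ : X → X → Prop}
    (hF : MNFerrers succ 3 3) {a b c : X}
    (hab : CanonComp succ a b) (hbc : CanonComp succ b c) : CanonComp succ a c := by
  let x : ℕ → X := fun i => if i = 0 then a else if i = 1 then b else c
  have hx : ∀ i : ℕ, i + 1 < 3 → CanonComp succ (x i) (x (i + 1)) := by
    intro i hi
    obtain rfl | rfl : i = 0 ∨ i = 1 := by omega
    · exact hab
    · exact hbc
  exact or_self_iff.mp (hF x x hx hx)

/-- Reflexivity of `≿` is needed for the chain consisting of a single element. -/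
theorem CanonComp.chain_of_33Ferrers {X : Type*} {succ : X → X → Prop}
    (hasym : ∀ a b : X, succ a b → ¬ succ b a) (hF : MNFerrers succ 3 3)
    {m : ℕ} {x : ℕ → X} (hx : ∀ i : ℕ, i + 1 < m → CanonComp succ (x i) (x (i + 1))) :
    ∀ k : ℕ, k < m → CanonComp succ (x 0) (x k) := by
  intro k
  induction k with
  | zero => exact fun _ h => hasym _ _ h h
  | succ k ih => exact fun hk => (ih (by omega)).trans_of_33Ferrers hF (hx k hk)

/-- An asymmetric `(3,3)`-Ferrers relation is `(m,n)`-Ferrers for all `m ≥ n ≥ 1`. -/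
theorem mnFerrers_of_33Ferrers {X : Type*} (succ : X → X → Prop)
    (hasym : ∀ a b : X, succ a b → ¬ succ b a)
    (hF : MNFerrers succ 3 3) :
    ∀ m n : ℕ, n ≤ m → 1 ≤ n → MNFerrers succ m n := by
  intro m n hnm hn x y hx hy
  have hxm := CanonComp.chain_of_33Ferrers hasym hF hx (m - 1) (by omega)
  have hyn := CanonComp.chain_of_33Ferrers hasym hF hy (n - 1) (by omega)
  by_cases h : succ (y (n - 1)) (x 0)
  · have hyx : CanonComp succ (y (n - 1)) (x 0) := hasym _ _ h
    exact Or.inr ((hyn.trans_of_33Ferrers hF hyx).trans_of_33Ferrers hF hxm)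
  · exact Or.inl h
end
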